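/- For every η > 0 there exists N₀ such that for all odd N = 2k + 1 ≥ N₀ the following holds. Let T be any randomized decision tree on inputs from {0,1}^N such that β_i(T) ≥ N^(-1/5) for every coordinate i. Let X be uniformly distributed on the set of strings in {0,1}^N having exactly k or exactly k + 1 ones. Then Pr[ T(X) = Majority(X) ] ≤ 1/2 + η, where Majority(X) = 1 if X has at least k + 1 ones and 0 otherwise. In particular, such a randomized decision tree cannot compute the majority function on N bits with error probability bounded below 1/2 by a constant. -/

import Mathlib

/-- A randomized decision tree on inputs from `{0,1}^k`: each internal node is
labeled by a coordinate `i ∈ {1,…,k}` and a function `g : {0,1} → [0,1]`; on input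
`x`, the computation at such a node moves to the left child with probability
`g (x i)` and to the right child with probability `1 - g (x i)`, independently
across nodes; leaves are labeled by output bits. -/
inductive RTree (k : ℕ) : Type where
  | leaf : Bool → RTree k
  | node : Fin k → (Bool → ℝ) → RTree k → RTree k → RTree k

namespace RTree

/-- All transition probabilities lie in `[0,1]`. -/
def Valid {k : ℕ} : RTree k → Prop
  | .leaf _ => True
  | .node _ g t0 t1 => (∀ z, 0 ≤ g z ∧ g z ≤ 1) ∧ Valid t0 ∧ Valid t1

/-- The probability, on input `x`, that the computation reaches the leaf at
position `p` (a root-to-leaf path, `false` = left, `true` = right). -/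
def leafDist {k : ℕ} : RTree k → (Fin k → Bool) → List Bool → ℝ
  | .leaf _, _, p => if p = [] then 1 else 0
  | .node _ _ _ _, _, [] => 0
  | .node i g t0 _, x, false :: p => g (x i) * leafDist t0 x p
  | .node i g _ t1, x, true :: p => (1 - g (x i)) * leafDist t1 x p

/-- The probability that the output `T(x)` (the 0/1 label of the leaf reached)
is `1` on input `x`. -/
def outProb {k : ℕ} : RTree k → (Fin k → Bool) → ℝ
  | .leaf b, _ => if b then 1 else 0
  | .node i g t0 t1, x => g (x i) * outProb t0 x + (1 - g (x i)) * outProb t1 x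

/-- `IsMod i T T'` holds iff `T'` is obtained from `T` by keeping unchanged every
node labeled `i` and replacing, at each node labeled `j ≠ i`, the random transition
by an arbitrary fixed deterministic choice of child (a constant transition
function `1` or `0`). -/
def IsMod {k : ℕ} (i : Fin k) : RTree k → RTree k → Prop
  | .leaf b, .leaf b' => b' = b
  | .node j g t0 t1, .node j' g' t0' t1' =>
      j' = j ∧ IsMod i t0 t0' ∧ IsMod i t1 t1' ∧
        (if j = i then g' = g else g' = (fun _ => 1) ∨ g' = (fun _ => 0))
  | _, _ => False

/-- The overlap `∑_ℓ min (D'_0 ℓ) (D'_1 ℓ)` of the two leaf distributions of a tree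
whose only input dependence is on coordinate `i`, when `x i = 0` resp. `x i = 1`. -/
noncomputable def ovl {k : ℕ} (t : RTree k) : ℝ :=
  ∑' p : List Bool, min (t.leafDist (fun _ => false) p) (t.leafDist (fun _ => true) p)

/-- The uncertainty `β_i(T)` of `T` about coordinate `i`: the minimum, over all
trees `T'` obtained from `T` by fixing deterministic choices at all nodes labeled
`j ≠ i`, of the overlap between the leaf distributions of `T'` for `x i = 0` and
`x i = 1`. -/
noncomputable def beta {k : ℕ} (t : RTree k) (i : Fin k) : ℝ :=
  sInf {v : ℝ | ∃ t', IsMod i t t' ∧ ovl t' = v}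

end RTree

/-- The number of ones in a boolean string. -/
def wt {N : ℕ} (x : Fin N → Bool) : ℕ := (Finset.univ.filter fun i => x i = true).card

/-- The majority function: `1` iff more than half the bits are `1`
(for `N = 2k + 1`, iff at least `k + 1` bits are `1`). -/
def maj {N : ℕ} (x : Fin N → Bool) : Bool := decide (N < 2 * wt x)

/-- The game value: the least overlap about coordinate `i` achievable from prior weights `a`. -/
noncomputable def gameVal {k : ℕ} (i : Fin k) : RTree k → (Bool → ℝ) → ℝ
  | .leaf _, a => min (a false) (a true)
  | .node j g t0 t1, a =>
      if j = i then gameVal i t0 (fun b => a b * g b) + gameVal i t1 (fun b => a b * (1 - g b))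
      else min (gameVal i t0 a) (gameVal i t1 a)

theorem gameVal_le {k : ℕ} (i : Fin k) (t : RTree k) (a : Bool → ℝ) :
    ∀ b, gameVal i t a ≤ a b := by
  induction t generalizing a with
  | leaf c => intro b; cases b <;> simp [gameVal]
  | node j g t0 t1 h0 h1 =>
    intro b
    simp only [gameVal]
    split_ifs with h
    · have e0 := h0 (fun b => a b * g b) b
      have e1 := h1 (fun b => a b * (1 - g b)) b
      nlinarith
    · exact (min_le_left _ _).trans (h0 a b)

theorem hasSum_listBool {f : List Bool → ℝ} {u v : ℝ} (hn : f [] = 0)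
    (h0 : HasSum (fun p => f (false :: p)) u) (h1 : HasSum (fun p => f (true :: p)) v) :
    HasSum f (u + v) := by
  let f0 : List Bool → ℝ := fun p => match p with
    | false :: q => f (false :: q)
    | _ => 0
  let f1 : List Bool → ℝ := fun p => match p with
    | true :: q => f (true :: q)
    | _ => 0
  have e0 : HasSum f0 u := by
    refine (Function.Injective.hasSum_iff (g := fun p => false :: p) ?_ ?_).1 h0
    · intro p q h; simpa using h
    · rintro (_ | ⟨_ | _, q⟩) hq
      · rfl
      · exact absurd ⟨q, rfl⟩ hq
      · rfl
  have e1 : HasSum f1 v := by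
    refine (Function.Injective.hasSum_iff (g := fun p => true :: p) ?_ ?_).1 h1
    · intro p q h; simpa using h
    · rintro (_ | ⟨_ | _, q⟩) hq
      · rfl
      · rfl
      · exact absurd ⟨q, rfl⟩ hq
  have := e0.add e1
  convert this using 1
  funext p
  rcases p with (_ | ⟨_ | _, q⟩) <;> simp [f0, f1, hn]

theorem exists_mod {k : ℕ} (i : Fin k) (t : RTree k) (a : Bool → ℝ) :
    ∃ t', RTree.IsMod i t t' ∧ HasSum (fun p => min (a false * t'.leafDist (fun _ => false) p)
      (a true * t'.leafDist (fun _ => true) p)) (gameVal i t a) := by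
  induction t generalizing a with
  | leaf c =>
    refine ⟨.leaf c, rfl, ?_⟩
    convert hasSum_single (f := fun p => min (a false * (RTree.leaf c : RTree k).leafDist (fun _ => false) p)
      (a true * (RTree.leaf c : RTree k).leafDist (fun _ => true) p)) [] ?_ using 1
    · simp [gameVal, RTree.leafDist]
    · intro p hp
      simp [RTree.leafDist, hp]
  | node j g t0 t1 h0 h1 =>
    by_cases h : j = i
    · obtain ⟨s0, m0, e0⟩ := h0 (fun b => a b * g b)
      obtain ⟨s1, m1, e1⟩ := h1 (fun b => a b * (1 - g b))
      refine ⟨.node j g s0 s1, ⟨rfl, m0, m1, by simp [h]⟩, ?_⟩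
      simp only [gameVal, if_pos h]
      apply hasSum_listBool
      · simp [RTree.leafDist]
      · simpa only [RTree.leafDist, mul_assoc] using e0
      · simpa only [RTree.leafDist, mul_assoc] using e1
    · obtain ⟨s0, m0, e0⟩ := h0 a
      obtain ⟨s1, m1, e1⟩ := h1 a
      simp only [gameVal, if_neg h]
      rcases le_total (gameVal i t0 a) (gameVal i t1 a) with hl | hl
      · refine ⟨.node j (fun _ => 1) s0 s1, ⟨rfl, m0, m1, by simp [h]⟩, ?_⟩
        rw [min_eq_left hl, ← add_zero (gameVal i t0 a)]
        apply hasSum_listBool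
        · simp [RTree.leafDist]
        · simpa only [RTree.leafDist, one_mul] using e0
        · simp [RTree.leafDist, hasSum_zero]
      · refine ⟨.node j (fun _ => 0) s0 s1, ⟨rfl, m0, m1, by simp [h]⟩, ?_⟩
        rw [min_eq_right hl, ← zero_add (gameVal i t1 a)]
        apply hasSum_listBool
        · simp [RTree.leafDist]
        · simp [RTree.leafDist, hasSum_zero]
        · simpa only [RTree.leafDist, one_mul, sub_zero] using e1

theorem beta_le_gameVal {k : ℕ} (i : Fin k) (t : RTree k) (h : 0 < t.beta i) :
    t.beta i ≤ gameVal i t (fun _ => 1) := by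
  obtain ⟨t', hm, hs⟩ := exists_mod i t (fun _ => 1)
  have hb : BddBelow {v : ℝ | ∃ t', RTree.IsMod i t t' ∧ RTree.ovl t' = v} := by
    by_contra hb
    have := Real.sInf_of_not_bddBelow hb
    unfold RTree.beta at h
    linarith
  refine csInf_le hb ⟨t', hm, ?_⟩
  have := hs.tsum_eq
  simp only [one_mul] at this
  exact this

theorem leaf_factor (θ a0 a1 : ℝ) (h0 : 0 ≤ a0) (h1 : 0 ≤ a1) :
    ‖(a0 : ℂ) + a1 * Complex.exp (θ * Complex.I)‖ ≤
      a0 + a1 - (1 - Real.cos θ) / 2 * min a0 a1 := by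
  have hc := Real.cos_le_one θ
  have hc' := Real.neg_one_le_cos θ
  have hm0 := min_le_left a0 a1
  have hm1 := min_le_right a0 a1
  have hm : 0 ≤ min a0 a1 := le_min h0 h1
  have hmm : (a0 + a1) * min a0 a1 ≤ 2 * (a0 * a1) := by
    rcases le_total a0 a1 with h | h
    · rw [min_eq_left h]; nlinarith
    · rw [min_eq_right h]; nlinarith
  set m := min a0 a1
  set c := (1 - Real.cos θ) / 2 with hcdef
  have hc0 : 0 ≤ c := by linarith
  have hc1 : c ≤ 1 := by linarith
  have hR : 0 ≤ a0 + a1 - c * m := by nlinarith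
  refine le_of_sq_le_sq ?_ hR
  rw [← Complex.normSq_eq_norm_sq, Complex.normSq_apply]
  simp only [Complex.add_re, Complex.add_im, Complex.mul_re, Complex.mul_im, Complex.ofReal_re,
    Complex.ofReal_im, Complex.exp_ofReal_mul_I_re, Complex.exp_ofReal_mul_I_im]
  have hs := Real.sin_sq_add_cos_sq θ
  have hcos : Real.cos θ = 1 - 2 * c := by linarith
  have e : (a0 + (a1 * Real.cos θ - 0 * Real.sin θ)) * (a0 + (a1 * Real.cos θ - 0 * Real.sin θ)) +
      (0 + (a1 * Real.sin θ + 0 * Real.cos θ)) * (0 + (a1 * Real.sin θ + 0 * Real.cos θ))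
      = (a0 + a1) ^ 2 - 4 * c * (a0 * a1) := by
    have : Real.sin θ ^ 2 = 1 - Real.cos θ ^ 2 := by linarith
    ring_nf
    rw [this, hcos]; ring
  rw [e]
  nlinarith [mul_le_mul_of_nonneg_left hmm hc0, sq_nonneg (c * m)]

/-- phase weight of a bit -/
noncomputable def ph (θ : ℝ) (b : Bool) : ℂ := if b then Complex.exp (θ * Complex.I) else 1

theorem prod_modify {N : ℕ} (a : Fin N → Bool → ℝ) (θ : ℝ) (j : Fin N) (g : Bool → ℝ)
    (x : Fin N → Bool) :
    ∏ i, (((a i (x i) * (if i = j then g (x i) else 1) : ℝ) : ℂ) * ph θ (x i)) =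
      (g (x j) : ℂ) * ∏ i, ((a i (x i) : ℂ) * ph θ (x i)) := by
  have : ∀ i, (((a i (x i) * (if i = j then g (x i) else 1) : ℝ) : ℂ) * ph θ (x i)) =
      (if i = j then (g (x i) : ℂ) else 1) * ((a i (x i) : ℂ) * ph θ (x i)) := by
    intro i; split_ifs <;> push_cast <;> ring
  rw [Finset.prod_congr rfl (fun i _ => this i), Finset.prod_mul_distrib]
  simp

theorem char_bound {N : ℕ} (θ : ℝ) (t : RTree N) (hv : t.Valid) (a : Fin N → Bool → ℝ)
    (ha : ∀ i b, 0 ≤ a i b) :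
    ‖∑ x : Fin N → Bool, (∏ i, ((a i (x i) : ℂ) * ph θ (x i))) * (t.outProb x : ℂ)‖ ≤
      ∏ i, (a i false + a i true - (1 - Real.cos θ) / 2 * gameVal i t (a i)) := by
  have hc0 : 0 ≤ (1 - Real.cos θ) / 2 := by linarith [Real.cos_le_one θ]
  have hc1 : (1 - Real.cos θ) / 2 ≤ 1 := by linarith [Real.neg_one_le_cos θ]
  have hnn : ∀ (t : RTree N) (i : Fin N) (a : Bool → ℝ), (∀ b, 0 ≤ a b) →
      0 ≤ a false + a true - (1 - Real.cos θ) / 2 * gameVal i t a := by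
    intro t i a ha
    have h1 := gameVal_le i t a false
    have h2 := ha false
    have h3 := ha true
    nlinarith
  induction t generalizing a with
  | leaf c =>
    have hrhs : ∀ i, ‖∑ b : Bool, (a i b : ℂ) * ph θ b‖ ≤
        a i false + a i true - (1 - Real.cos θ) / 2 * gameVal i (.leaf c) (a i) := by
      intro i
      have := leaf_factor θ (a i false) (a i true) (ha i _) (ha i _)
      simpa [gameVal, ph, add_comm] using this
    have hprod : ∑ x : Fin N → Bool, (∏ i, ((a i (x i) : ℂ) * ph θ (x i))) =
        ∏ i, ∑ b : Bool, (a i b : ℂ) * ph θ b := by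
      rw [Finset.prod_univ_sum, Fintype.piFinset_univ]
    have hle : ‖∑ x : Fin N → Bool, (∏ i, ((a i (x i) : ℂ) * ph θ (x i)))‖ ≤
        ∏ i, (a i false + a i true - (1 - Real.cos θ) / 2 * gameVal i (.leaf c) (a i)) := by
      rw [hprod, norm_prod]
      exact Finset.prod_le_prod (fun i _ => norm_nonneg _) (fun i _ => hrhs i)
    cases c
    · simpa [RTree.outProb] using Finset.prod_nonneg (fun i _ => hnn (.leaf false) i (a i) (ha i))
    · simpa [RTree.outProb] using hle
  | node j g t0 t1 h0 h1 =>
    obtain ⟨hg, hv0, hv1⟩ := hv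
    set c := (1 - Real.cos θ) / 2 with hc
    set f : Fin N → ℝ := fun i => a i false + a i true - c * gameVal i (.node j g t0 t1) (a i)
      with hf
    have key : ∀ (s : RTree N) (g' : Bool → ℝ), (∀ b, 0 ≤ g' b) →
        (∀ (a : Fin N → Bool → ℝ), (∀ i b, 0 ≤ a i b) →
          ‖∑ x : Fin N → Bool, (∏ i, ((a i (x i) : ℂ) * ph θ (x i))) * (s.outProb x : ℂ)‖ ≤
          ∏ i, (a i false + a i true - c * gameVal i s (a i))) →
        (∀ i, i ≠ j → gameVal i (.node j g t0 t1) (a i) ≤ gameVal i s (a i)) →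
        ‖∑ x : Fin N → Bool, (∏ i, ((a i (x i) : ℂ) * ph θ (x i))) *
            ((g' (x j) : ℂ) * (s.outProb x : ℂ))‖ ≤
          (a j false * g' false + a j true * g' true - c * gameVal j s (fun b => a j b * g' b)) *
            ∏ i ∈ Finset.univ.erase j, f i := by
      intro s g' hg' ih hle
      have hnn' : ∀ i b, 0 ≤ a i b * (if i = j then g' b else 1) := by
        intro i b
        refine mul_nonneg (ha i b) ?_
        split_ifs
        · exact hg' b
        · exact zero_le_one
      have := ih (fun i b => a i b * (if i = j then g' b else 1)) hnn'
      have e : ∀ x : Fin N → Bool, (∏ i, ((a i (x i) : ℂ) * ph θ (x i))) *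
            ((g' (x j) : ℂ) * (s.outProb x : ℂ)) =
          (∏ i, (((a i (x i) * (if i = j then g' (x i) else 1) : ℝ) : ℂ) * ph θ (x i))) *
            (s.outProb x : ℂ) := by
        intro x; rw [prod_modify]; ring
      rw [Finset.sum_congr rfl (fun x _ => e x)]
      refine this.trans ?_
      rw [← Finset.mul_prod_erase Finset.univ _ (Finset.mem_univ j)]
      simp only [if_true]
      have hj := hnn s j (fun b => a j b * g' b) (fun b => mul_nonneg (ha j b) (hg' b))
      refine mul_le_mul_of_nonneg_left ?_ hj
      refine Finset.prod_le_prod (fun i _ => hnn s i _ (hnn' i)) ?_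
      intro i hi
      have hij : i ≠ j := (Finset.mem_erase.1 hi).1
      simp only [if_neg hij, mul_one, hf]
      have := mul_le_mul_of_nonneg_left (hle i hij) hc0
      linarith
    have k0 := key t0 g (fun b => (hg b).1) (fun a ha => h0 hv0 a ha) (by
      intro i hi
      simp only [gameVal, if_neg hi.symm]
      exact min_le_left _ _)
    have k1 := key t1 (fun b => 1 - g b) (fun b => by linarith [(hg b).2])
      (fun a ha => h1 hv1 a ha) (by
      intro i hi
      simp only [gameVal, if_neg hi.symm]
      exact min_le_right _ _)
    have hsplit : ∑ x : Fin N → Bool, (∏ i, ((a i (x i) : ℂ) * ph θ (x i))) *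
          (((RTree.node j g t0 t1).outProb x : ℝ) : ℂ) =
        (∑ x : Fin N → Bool, (∏ i, ((a i (x i) : ℂ) * ph θ (x i))) *
            ((g (x j) : ℂ) * (t0.outProb x : ℂ))) +
        ∑ x : Fin N → Bool, (∏ i, ((a i (x i) : ℂ) * ph θ (x i))) *
            (((1 - g (x j) : ℝ) : ℂ) * (t1.outProb x : ℂ)) := by
      rw [← Finset.sum_add_distrib]
      refine Finset.sum_congr rfl (fun x _ => ?_)
      simp only [RTree.outProb]
      push_cast
      ring
    rw [hsplit]
    refine (norm_add_le _ _).trans ((add_le_add k0 k1).trans (le_of_eq ?_))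
    rw [← Finset.mul_prod_erase Finset.univ f (Finset.mem_univ j), ← add_mul]
    congr 1
    simp only [hf, gameVal, if_true]
    ring

theorem prod_ph {N : ℕ} (θ : ℝ) (x : Fin N → Bool) :
    ∏ i, ph θ (x i) = Complex.exp ((wt x : ℂ) * (θ * Complex.I)) := by
  simp only [ph, wt]
  rw [Finset.prod_ite]
  simp [Complex.exp_nat_mul]

theorem char_bound_exp {N : ℕ} (t : RTree N) (hv : t.Valid) (β : ℝ) (hβ : 0 ≤ β)
    (hb : ∀ i, β ≤ gameVal i t (fun _ => 1)) (θ : ℝ) (hθ : |θ| ≤ Real.pi) :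
    ‖∑ x : Fin N → Bool, Complex.exp ((wt x : ℂ) * (θ * Complex.I)) * (t.outProb x : ℂ)‖ ≤
      2 ^ N * Real.exp (-(N * β / (2 * Real.pi ^ 2) * θ ^ 2)) := by
  have h := char_bound θ t hv (fun _ _ => 1) (fun _ _ => zero_le_one)
  simp only [Complex.ofReal_one, one_mul, prod_ph] at h
  refine h.trans ?_
  have hcos := Real.cos_le_one_sub_mul_cos_sq hθ
  have hc0 : 0 ≤ (1 - Real.cos θ) / 2 := by linarith [Real.cos_le_one θ]
  have hc1 : (1 - Real.cos θ) / 2 ≤ 1 := by linarith [Real.neg_one_le_cos θ]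
  have hfac : ∀ i : Fin N, (1 : ℝ) + 1 - (1 - Real.cos θ) / 2 * gameVal i t (fun _ => 1) ≤
      2 * Real.exp (-(β / (2 * Real.pi ^ 2) * θ ^ 2)) := by
    intro i
    have h1 := Real.add_one_le_exp (-(β / (2 * Real.pi ^ 2) * θ ^ 2))
    have h2 := mul_le_mul_of_nonneg_left (hb i) hc0
    have h3 : 2 / Real.pi ^ 2 * θ ^ 2 * β ≤ (1 - Real.cos θ) * β :=
      mul_le_mul_of_nonneg_right (by linarith) hβ
    have h4 : 2 / Real.pi ^ 2 * θ ^ 2 * β = 4 * (β / (2 * Real.pi ^ 2) * θ ^ 2) := by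
      field_simp; ring
    linarith
  have hnn : ∀ i : Fin N, 0 ≤ (1 : ℝ) + 1 - (1 - Real.cos θ) / 2 * gameVal i t (fun _ => 1) := by
    intro i
    have h1 := gameVal_le i t (fun _ => 1) false
    nlinarith
  refine (Finset.prod_le_prod (fun i _ => hnn i) (fun i _ => hfac i)).trans (le_of_eq ?_)
  rw [Finset.prod_const, Finset.card_univ, Fintype.card_fin, mul_pow, ← Real.exp_nat_mul]
  congr 2
  ring

theorem integral_exp_int (n : ℤ) :
    ∫ θ in (-Real.pi)..Real.pi, Complex.exp ((n : ℂ) * (θ * Complex.I)) =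
      if n = 0 then 2 * (Real.pi : ℂ) else 0 := by
  split_ifs with h
  · subst h
    simp
    ring
  · have hc : (n : ℂ) * Complex.I ≠ 0 := mul_ne_zero (by exact_mod_cast h) Complex.I_ne_zero
    have e : ∀ θ : ℝ, Complex.exp ((n : ℂ) * (θ * Complex.I)) =
        Complex.exp ((n : ℂ) * Complex.I * θ) := by intro θ; congr 1; ring
    simp_rw [e]
    rw [integral_exp_mul_complex hc]
    have : Complex.exp ((n : ℂ) * Complex.I * (Real.pi : ℝ)) =
        Complex.exp ((n : ℂ) * Complex.I * ((-Real.pi : ℝ) : ℂ)) := by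
      rw [Complex.exp_eq_exp_iff_exists_int]
      refine ⟨n, ?_⟩
      push_cast
      ring
    rw [this, sub_self, zero_div]

theorem integral_half (B : ℝ) (hB : 0 < B) (a b : ℝ) :
    ∫ θ in a..b, θ * Real.exp (-(B * θ ^ 2)) =
      (Real.exp (-(B * a ^ 2)) - Real.exp (-(B * b ^ 2))) / (2 * B) := by
  have hd : ∀ θ ∈ Set.uIcc a b, HasDerivAt (fun θ : ℝ => -(Real.exp (-(B * θ ^ 2))) / (2 * B))
      (θ * Real.exp (-(B * θ ^ 2))) θ := by
    intro θ _
    have h1 : HasDerivAt (fun θ : ℝ => -(B * θ ^ 2)) (-(B * (2 * θ))) θ := by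
      have h0 : HasDerivAt (fun θ : ℝ => B * θ ^ 2) (B * (2 * θ)) θ := by
        have := (hasDerivAt_pow 2 θ).const_mul B
        norm_num at this
        exact this
      exact h0.neg
    have h2 := h1.exp.neg.div_const (2 * B)
    have h3 : -(Real.exp (-(B * θ ^ 2)) * -(B * (2 * θ))) / (2 * B) =
        θ * Real.exp (-(B * θ ^ 2)) := by
      field_simp
    rw [h3] at h2
    exact h2
  rw [intervalIntegral.integral_eq_sub_of_hasDerivAt hd
    (Continuous.intervalIntegrable (by fun_prop) _ _)]
  ring

theorem integral_abs_exp (B : ℝ) (hB : 0 < B) :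
    ∫ θ in (-Real.pi)..Real.pi, |θ| * Real.exp (-(B * θ ^ 2)) ≤ 1 / B := by
  rw [← intervalIntegral.integral_add_adjacent_intervals (b := 0)
    (Continuous.intervalIntegrable (by fun_prop) _ _)
    (Continuous.intervalIntegrable (by fun_prop) _ _)]
  have h1 : ∫ θ in (-Real.pi)..0, |θ| * Real.exp (-(B * θ ^ 2)) =
      ∫ θ in (-Real.pi)..0, -(θ * Real.exp (-(B * θ ^ 2))) := by
    refine intervalIntegral.integral_congr (fun θ hθ => ?_)
    rw [Set.uIcc_of_le (by linarith [Real.pi_pos])] at hθ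
    have : |θ| = -θ := abs_of_nonpos hθ.2
    change |θ| * _ = -(θ * _)
    rw [this]; ring
  have h2 : ∫ θ in (0 : ℝ)..Real.pi, |θ| * Real.exp (-(B * θ ^ 2)) =
      ∫ θ in (0 : ℝ)..Real.pi, (θ * Real.exp (-(B * θ ^ 2))) := by
    refine intervalIntegral.integral_congr (fun θ hθ => ?_)
    rw [Set.uIcc_of_le (by linarith [Real.pi_pos])] at hθ
    have : |θ| = θ := abs_of_nonneg hθ.1
    change |θ| * _ = θ * _
    rw [this]
  rw [h1, h2, intervalIntegral.integral_neg, integral_half B hB, integral_half B hB]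
  have := Real.exp_pos (-(B * Real.pi ^ 2))
  simp only [neg_sq]
  have e : (1 : ℝ) / B = 2 / (2 * B) := by field_simp
  rw [e, ← neg_div, ← add_div]
  refine div_le_div_of_nonneg_right ?_ (by positivity)
  simp only [ne_eq, OfNat.ofNat_ne_zero, not_false_eq_true, zero_pow, mul_zero, neg_zero,
    Real.exp_zero]
  linarith

theorem diff_bound {N : ℕ} (t : RTree N) (hv : t.Valid) (β : ℝ) (hβ : 0 < β) (hN : 0 < N)
    (hb : ∀ i, β ≤ gameVal i t (fun _ => 1)) (k : ℕ) :
    |∑ x : Fin N → Bool, t.outProb x *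
      ((if wt x = k + 1 then 1 else 0) - (if wt x = k then 1 else 0))| ≤
      2 ^ N * Real.pi / (N * β) := by
  set D := ∑ x : Fin N → Bool, t.outProb x *
      ((if wt x = k + 1 then 1 else 0) - (if wt x = k then 1 else 0)) with hD
  have hN' : (0 : ℝ) < N := by exact_mod_cast hN
  have hpi := Real.pi_pos
  set B := N * β / (2 * Real.pi ^ 2) with hBdef
  have hB : 0 < B := by positivity
  set H : ℝ → ℂ := fun θ => ∑ x : Fin N → Bool, (t.outProb x : ℂ) *
    (Complex.exp ((((wt x : ℤ) - (k + 1 : ℕ) : ℤ) : ℂ) * (θ * Complex.I)) -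
      Complex.exp ((((wt x : ℤ) - k : ℤ) : ℂ) * (θ * Complex.I))) with hH
  have hint : ∫ θ in (-Real.pi)..Real.pi, H θ = ((2 * Real.pi * D : ℝ) : ℂ) := by
    simp only [hH]
    rw [intervalIntegral.integral_finsetSum]
    · rw [hD, Finset.mul_sum]
      push_cast
      refine Finset.sum_congr rfl (fun x _ => ?_)
      rw [intervalIntegral.integral_const_mul, intervalIntegral.integral_sub
        (Continuous.intervalIntegrable (by fun_prop) _ _)
        (Continuous.intervalIntegrable (by fun_prop) _ _)]
      have e1 := integral_exp_int ((wt x : ℤ) - (k + 1 : ℕ))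
      have e2 := integral_exp_int ((wt x : ℤ) - k)
      push_cast at e1 e2
      rw [e1, e2]
      have i1 : ((wt x : ℤ) - (k + 1) = 0) ↔ wt x = k + 1 := by omega
      have i2 : ((wt x : ℤ) - k = 0) ↔ wt x = k := by omega
      simp only [i1, i2]
      split_ifs <;> push_cast <;> ring
    · intro x _
      exact Continuous.intervalIntegrable (by fun_prop) _ _
  have hHb : ∀ θ : ℝ, |θ| ≤ Real.pi → ‖H θ‖ ≤ 2 ^ N * (|θ| * Real.exp (-(B * θ ^ 2))) := by
    intro θ hθ
    have e : H θ = (∑ x : Fin N → Bool, Complex.exp ((wt x : ℂ) * (θ * Complex.I)) *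
        (t.outProb x : ℂ)) * (Complex.exp (((-(k + 1 : ℝ) * θ : ℝ) : ℂ) * Complex.I) *
          (-(Complex.exp (Complex.I * θ) - 1))) := by
      simp only [hH]
      rw [Finset.sum_mul]
      refine Finset.sum_congr rfl (fun x _ => ?_)
      have a1 : Complex.exp ((((wt x : ℤ) - (k + 1 : ℕ) : ℤ) : ℂ) * (θ * Complex.I)) =
          Complex.exp ((wt x : ℂ) * (θ * Complex.I)) *
          Complex.exp (((-(k + 1 : ℝ) * θ : ℝ) : ℂ) * Complex.I) := by
        rw [← Complex.exp_add]; congr 1; push_cast; ring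
      have a2 : Complex.exp ((((wt x : ℤ) - k : ℤ) : ℂ) * (θ * Complex.I)) =
          Complex.exp ((wt x : ℂ) * (θ * Complex.I)) *
          Complex.exp (((-(k + 1 : ℝ) * θ : ℝ) : ℂ) * Complex.I) * Complex.exp (Complex.I * θ) := by
        rw [← Complex.exp_add, ← Complex.exp_add]; congr 1; push_cast; ring
      rw [a1, a2]; ring
    rw [e, norm_mul, norm_mul, norm_neg, Complex.norm_exp_ofReal_mul_I, one_mul]
    have b1 := char_bound_exp t hv β hβ.le hb θ hθ
    have b2 : ‖Complex.exp (Complex.I * θ) - 1‖ ≤ |θ| := Real.norm_exp_I_mul_ofReal_sub_one_le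
    calc _ ≤ (2 ^ N * Real.exp (-(B * θ ^ 2))) * |θ| :=
          mul_le_mul b1 b2 (norm_nonneg _) (by positivity)
      _ = _ := by ring
  have hbound : ‖∫ θ in (-Real.pi)..Real.pi, H θ‖ ≤
      ∫ θ in (-Real.pi)..Real.pi, 2 ^ N * (|θ| * Real.exp (-(B * θ ^ 2))) := by
    refine intervalIntegral.norm_integral_le_of_norm_le (by linarith) ?_
      (Continuous.intervalIntegrable (by fun_prop) _ _)
    refine Filter.Eventually.of_forall (fun θ hθ => hHb θ ?_)
    exact abs_le.2 ⟨hθ.1.le, hθ.2⟩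
  rw [intervalIntegral.integral_const_mul, hint, Complex.norm_real, Real.norm_eq_abs, abs_mul,
    abs_of_pos (by positivity : (0 : ℝ) < 2 * Real.pi)] at hbound
  have h2 := hbound.trans (mul_le_mul_of_nonneg_left (integral_abs_exp B hB)
    (by positivity : (0 : ℝ) ≤ 2 ^ N))
  have h3 : (2 : ℝ) ^ N * (1 / B) = 2 * Real.pi * (2 ^ N * Real.pi / (N * β)) := by
    rw [hBdef]; field_simp
  rw [h3] at h2
  exact le_of_mul_le_mul_left h2 (by positivity)

theorem card_wt (N j : ℕ) :
    (Finset.univ.filter fun x : Fin N → Bool => wt x = j).card = N.choose j := by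
  have h : (Finset.powersetCard j (Finset.univ : Finset (Fin N))).card = N.choose j := by simp
  rw [← h]
  refine Finset.card_bij (fun x _ => Finset.univ.filter fun i => x i = true) ?_ ?_ ?_
  · intro x hx
    exact Finset.mem_powersetCard.2 ⟨Finset.subset_univ _, (Finset.mem_filter.1 hx).2⟩
  · intro x _ y _ hxy
    funext i
    have := congrArg (fun s => i ∈ s) hxy
    simp only [Finset.mem_filter, Finset.mem_univ, true_and, eq_iff_iff] at this
    exact Bool.eq_iff_iff.2 this
  · intro s hs
    refine ⟨fun i => decide (i ∈ s), ?_, ?_⟩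
    · have := (Finset.mem_powersetCard.1 hs).2
      refine Finset.mem_filter.2 ⟨Finset.mem_univ _, ?_⟩
      simp [wt, this]
    · ext i; simp

theorem centralBinom_lower (k : ℕ) (hk : 1 ≤ k) : 16 ^ k ≤ 4 * k * k.centralBinom ^ 2 := by
  induction k, hk using Nat.le_induction with
  | base => decide
  | succ n hn ih =>
    have h := Nat.succ_mul_centralBinom_succ n
    have hpos : 0 < n + 1 := Nat.succ_pos n
    refine Nat.le_of_mul_le_mul_left ?_ hpos
    calc (n + 1) * 16 ^ (n + 1) = 16 * (n + 1) * 16 ^ n := by ring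
      _ ≤ 16 * (n + 1) * (4 * n * n.centralBinom ^ 2) := Nat.mul_le_mul_left _ ih
      _ = 16 * n.centralBinom ^ 2 * (4 * n * (n + 1)) := by ring
      _ ≤ 16 * n.centralBinom ^ 2 * (2 * n + 1) ^ 2 := Nat.mul_le_mul_left _ (by nlinarith)
      _ = 4 * (2 * (2 * n + 1) * n.centralBinom) ^ 2 := by ring
      _ = 4 * ((n + 1) * (n + 1).centralBinom) ^ 2 := by rw [h]
      _ = _ := by ring

theorem choose_lower (k : ℕ) (hk : 1 ≤ k) :
    (4 : ℝ) ^ k ≤ 2 * Real.sqrt (2 * k + 1) * (2 * k + 1).choose k := by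
  have h1 : (16 : ℝ) ^ k ≤ 4 * k * (k.centralBinom : ℝ) ^ 2 := by
    exact_mod_cast centralBinom_lower k hk
  have h2 : (k.centralBinom : ℝ) ≤ (2 * k + 1).choose k := by
    have : k.centralBinom ≤ (2 * k + 1).choose k := Nat.choose_le_choose k (Nat.le_succ _)
    exact_mod_cast this
  refine le_of_sq_le_sq ?_ (by positivity)
  rw [mul_pow, mul_pow, Real.sq_sqrt (by positivity), ← pow_mul, mul_comm k 2, pow_mul]
  norm_num
  have h3 : (k.centralBinom : ℝ) ^ 2 ≤ ((2 * k + 1).choose k : ℝ) ^ 2 := by gcongr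
  have : (0 : ℝ) ≤ k := Nat.cast_nonneg k
  nlinarith [sq_nonneg (k.centralBinom : ℝ)]

open RTree in
/-- For every `η > 0` there is `N₀` such that for all odd `N = 2k + 1 ≥ N₀`:
if `T` is any randomized decision tree on inputs from `{0,1}^N` with uncertainty
`β_i(T) ≥ N^(-1/5)` for every coordinate `i`, and `X` is uniform on the strings with
exactly `k` or exactly `k + 1` ones, then `Pr[T(X) = Majority(X)] ≤ 1/2 + η`; in
particular such a tree cannot compute majority with error bounded below `1/2` by a
constant. -/
theorem uncertain_tree_cannot_compute_majority :
    ∀ η : ℝ, 0 < η → ∃ N₀ : ℕ, ∀ N k : ℕ, N = 2 * k + 1 → N₀ ≤ N →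
      ∀ T : RTree N, T.Valid → (∀ i : Fin N, (N : ℝ) ^ (-(1 / 5) : ℝ) ≤ T.beta i) →
        (1 / ((Finset.univ.filter fun x : Fin N → Bool =>
              wt x = k ∨ wt x = k + 1).card : ℝ)) *
          ∑ x ∈ Finset.univ.filter fun x : Fin N → Bool => wt x = k ∨ wt x = k + 1,
            (if maj x = true then T.outProb x else 1 - T.outProb x) ≤
        1 / 2 + η := by
  intro η hη
  have hlim : Filter.Tendsto (fun n : ℕ => 2 * Real.pi * (n : ℝ) ^ (-(3 / 10) : ℝ)) Filter.atTop
      (nhds 0) := by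
    have := ((tendsto_rpow_neg_atTop (by norm_num : (0 : ℝ) < 3 / 10)).comp
      tendsto_natCast_atTop_atTop).const_mul (2 * Real.pi)
    simpa using this
  obtain ⟨M, hM⟩ := Filter.eventually_atTop.1 (hlim.eventually_le_const hη)
  refine ⟨max M 3, ?_⟩
  intro N k hNk hN T hT hbeta
  have hNM := hM N ((le_max_left _ _).trans hN)
  have hN3 : 3 ≤ N := (le_max_right _ _).trans hN
  have hk : 1 ≤ k := by omega
  have hN0 : (0 : ℝ) < N := by exact_mod_cast (by omega : 0 < N)
  set β := (N : ℝ) ^ (-(1 / 5) : ℝ) with hβdef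
  have hβ : 0 < β := Real.rpow_pos_of_pos hN0 _
  have hW : ∀ i, β ≤ gameVal i T (fun _ => 1) := fun i =>
    (hbeta i).trans (beta_le_gameVal i T (hβ.trans_le (hbeta i)))
  have hD := (le_abs_self _).trans (diff_bound T hT β hβ (by omega) hW k)
  set D := ∑ x : Fin N → Bool, T.outProb x *
      ((if wt x = k + 1 then 1 else 0) - (if wt x = k then 1 else 0)) with hDdef
  set C : ℝ := ((2 * k + 1).choose k : ℝ) with hC
  have hdisj : Disjoint (Finset.univ.filter fun x : Fin N → Bool => wt x = k)
      (Finset.univ.filter fun x : Fin N → Bool => wt x = k + 1) := by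
    rw [Finset.disjoint_filter]; intro x _ h; omega
  have hcard : ((Finset.univ.filter fun x : Fin N → Bool =>
      wt x = k ∨ wt x = k + 1).card : ℝ) = 2 * C := by
    rw [Finset.filter_or, Finset.card_union_of_disjoint hdisj, card_wt, card_wt, hNk,
      Nat.choose_symm_half, hC]
    push_cast; ring
  have hsum : ∑ x ∈ Finset.univ.filter fun x : Fin N → Bool => wt x = k ∨ wt x = k + 1,
      (if maj x = true then T.outProb x else 1 - T.outProb x) = C + D := by
    have hCs : C = ∑ x : Fin N → Bool, (if wt x = k then (1 : ℝ) else 0) := by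
      rw [Finset.sum_boole, card_wt, hC, hNk]
    rw [hCs, hDdef, ← Finset.sum_add_distrib, Finset.sum_filter]
    refine Finset.sum_congr rfl (fun x _ => ?_)
    by_cases h1 : wt x = k
    · have hm : maj x = false := by simp [maj, h1]; omega
      simp [h1, hm]; ring
    · by_cases h2 : wt x = k + 1
      · have hm : maj x = true := by simp [maj, h2]; omega
        simp [h2, hm]
      · simp [h1, h2]
  rw [hcard, hsum]
  have hCl := choose_lower k hk
  rw [← hC] at hCl
  have hCpos : 0 < C := by
    have : 0 < (2 * k + 1).choose k := Nat.choose_pos (by omega)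
    rw [hC]; exact_mod_cast this
  have hNr : (2 * (k : ℝ) + 1) = N := by rw [hNk]; push_cast; ring
  rw [hNr] at hCl
  have hpow : (2 : ℝ) ^ N = 2 * 4 ^ k := by
    rw [hNk, pow_succ, pow_mul]; norm_num; ring
  have hrp : Real.sqrt N / (N * β) = (N : ℝ) ^ (-(3 / 10) : ℝ) := by
    rw [hβdef, Real.sqrt_eq_rpow, ← Real.rpow_one_add' hN0.le (by norm_num), ← Real.rpow_sub hN0]
    norm_num
  have hDb : D ≤ 2 * C * η := by
    have hpi := Real.pi_pos
    calc D ≤ 2 ^ N * Real.pi / (N * β) := hD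
      _ = 4 ^ k * (2 * Real.pi / (N * β)) := by rw [hpow]; ring
      _ ≤ (2 * Real.sqrt N * C) * (2 * Real.pi / (N * β)) :=
          mul_le_mul_of_nonneg_right hCl (by positivity)
      _ = 2 * C * (2 * Real.pi * (Real.sqrt N / (N * β))) := by ring
      _ ≤ 2 * C * η := by
          rw [hrp]; exact mul_le_mul_of_nonneg_left hNM (by positivity)
  rw [one_div, inv_mul_le_iff₀ (by positivity)]
  linarith
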